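/- Let S be a nonempty finite set of positive integers and let d be the GF(2)-dimension attached to S as in the context. Then the set of odd primes p such that χ_p(z) = 1 for every z ∈ S has natural density 2^{-d} in the primes. -/

import Mathlib

/-!
The density statement reduces to the equidistribution of the primes among the invertible residue
classes modulo `M`. By quadratic reciprocity, `p ↦ (χ_p(z))_{z ∈ S}` factors through a homomorphism
`(ℤ/Mℤ)ˣ → {±1}^S` with `M = 4 ∏ z`, so the primes in question have density `1 / #range`. The
symbols of distinct primes `q` are independent (Chinese remainder theorem), hence the range consists
of the `(-1)^{V w}`, where `V` is the matrix of multiplicities modulo 2; it has `2 ^ rank V`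
elements.

Equidistribution is a Tauberian theorem. Pairing `B (u) = e^{-u} ∑_{n ≤ e^u} f n` with a kernel
whose Fourier transform has compact support turns the Laplace transform on `Re s = 1` into a Fourier
integral of a continuous function, so Riemann–Lebesgue gives the limit of `B` in the mean against
a nonnegative kernel. Since `B (u) e^u` is monotone, such means squeeze `B` itself.
-/

section BoundaryValue

open MeasureTheory Filter Topology Complex Set FourierTransform

theorem fourier_fourierChar_smul (φ : ℝ → ℂ) (y u : ℝ) :
    𝓕 (fun t => Real.fourierChar (t * y) • φ t) u = 𝓕 φ (u - y) := by
  rw [Real.fourier_real_eq, Real.fourier_real_eq]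
  refine integral_congr_ae (Eventually.of_forall fun t => ?_)
  simp only [smul_smul, ← AddChar.map_add_eq_mul]
  ring_nf

variable {h : ℝ → ℂ} {C : ℝ} {G : ℂ → ℂ}

theorem integrableOn_cexp_neg_mul_mul_of_bounded (hm : Measurable h) (hC : ∀ u, ‖h u‖ ≤ C)
    {w : ℂ} (hw : 0 < w.re) : IntegrableOn (fun u : ℝ => cexp (-w * u) * h u) (Ioi 0) := by
  refine Integrable.mul_bdd (c := C) ?_ hm.aestronglyMeasurable (Eventually.of_forall hC)
  exact integrableOn_exp_mul_complex_Ioi (by simpa using hw) 0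

theorem fourier_indicator_cexp_mul
    (hG : ∀ w : ℂ, 0 < w.re → ∫ u in Ioi (0 : ℝ), cexp (-w * u) * h u = G w)
    {ε : ℝ} (hε : 0 < ε) (t : ℝ) :
    𝓕 ((Ioi 0).indicator fun u : ℝ => cexp (-ε * u) * h u) t = G (ε + 2 * Real.pi * t * I) := by
  rw [Real.fourier_real_eq_integral_exp_smul, ← hG _ (by simpa using hε),
    ← integral_indicator measurableSet_Ioi]
  congr 1 with u
  by_cases hu : u ∈ Ioi (0 : ℝ)
  · simp only [indicator_of_mem hu, smul_eq_mul, ← mul_assoc, ← Complex.exp_add]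
    congr 2
    push_cast
    ring
  · simp [indicator_of_notMem hu]

/-- Self-adjointness of the Fourier transform, applied on the vertical line `re w = ε`. -/
theorem integral_Ioi_fourier_mul_cexp_mul (hm : Measurable h) (hC : ∀ u, ‖h u‖ ≤ C)
    (hG : ∀ w : ℂ, 0 < w.re → ∫ u in Ioi (0 : ℝ), cexp (-w * u) * h u = G w)
    {φ : ℝ → ℂ} (hφ : Integrable φ) (y : ℝ) {ε : ℝ} (hε : 0 < ε) :
    ∫ u in Ioi (0 : ℝ), 𝓕 φ (u - y) * (cexp (-ε * u) * h u) =
      𝓕 (fun t : ℝ => φ t * G (ε + 2 * Real.pi * t * I)) (-y) := by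
  have hh : Integrable ((Ioi 0).indicator fun u : ℝ => cexp (-ε * u) * h u) :=
    (integrable_indicator_iff measurableSet_Ioi).2
      (integrableOn_cexp_neg_mul_mul_of_bounded hm hC (by simpa using hε))
  have hφ' : Integrable fun t => Real.fourierChar (t * y) • φ t :=
    ((Real.fourierIntegral_convergent_iff (-y)).2 hφ).congr
      (Eventually.of_forall fun t => by simp [mul_comm])
  calc ∫ u in Ioi (0 : ℝ), 𝓕 φ (u - y) * (cexp (-ε * u) * h u)
      = ∫ u, 𝓕 (fun t => Real.fourierChar (t * y) • φ t) u •
          (Ioi 0).indicator (fun u : ℝ => cexp (-ε * u) * h u) u := by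
        simp only [fourier_fourierChar_smul, smul_eq_mul, ← integral_indicator measurableSet_Ioi,
          indicator_mul_right]
    _ = ∫ t, (Real.fourierChar (t * y) • φ t) •
          𝓕 ((Ioi 0).indicator fun u : ℝ => cexp (-ε * u) * h u) t := by
        simpa only [flip_innerₗ] using! VectorFourier.integral_fourierIntegral_smul_eq_flip
          (L := innerₗ ℝ) Real.continuous_fourierChar continuous_inner hφ' hh
    _ = 𝓕 (fun t : ℝ => φ t * G (ε + 2 * Real.pi * t * I)) (-y) := by
        simp only [fourier_indicator_cexp_mul hG hε, Real.fourier_real_eq, mul_neg, neg_neg,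
          smul_mul_assoc, smul_eq_mul]

theorem tendsto_integral_Ioi_mul_cexp_mul (hm : Measurable h) (hC : ∀ u, ‖h u‖ ≤ C)
    {k : ℝ → ℂ} (hk : Integrable k) :
    Tendsto (fun ε : ℝ => ∫ u in Ioi (0 : ℝ), k u * (cexp (-ε * u) * h u)) (𝓝[>] 0)
      (𝓝 (∫ u in Ioi (0 : ℝ), k u * h u)) := by
  refine tendsto_integral_filter_of_dominated_convergence (fun u => ‖k u‖ * C) ?_ ?_
    (hk.norm.mul_const C).integrableOn ?_
  · refine Eventually.of_forall fun ε => hk.aestronglyMeasurable.restrict.mul ?_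
    exact Measurable.aestronglyMeasurable (by fun_prop)
  · filter_upwards [self_mem_nhdsWithin] with ε hε
    refine ae_restrict_of_forall_mem measurableSet_Ioi fun u hu => ?_
    have hexp : ‖cexp (-ε * u)‖ ≤ 1 := by
      rw [Complex.norm_exp]
      simpa using mul_nonneg (le_of_lt hε) (le_of_lt hu)
    rw [norm_mul, norm_mul]
    gcongr
    exact (mul_le_of_le_one_left (norm_nonneg _) hexp).trans (hC u)
  · refine Eventually.of_forall fun u => Tendsto.mono_left ?_ nhdsWithin_le_nhds
    have : Continuous fun ε : ℝ => k u * (cexp (-ε * u) * h u) := by fun_prop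
    simpa using this.tendsto 0

theorem integral_Ioi_fourier_mul (hm : Measurable h) (hC : ∀ u, ‖h u‖ ≤ C)
    (hG : ∀ w : ℂ, 0 < w.re → ∫ u in Ioi (0 : ℝ), cexp (-w * u) * h u = G w)
    (hGc : ContinuousOn G {w | 0 ≤ w.re}) {φ : ℝ → ℂ} (hφc : Continuous φ)
    (hφs : HasCompactSupport φ) (hφ : Integrable (𝓕 φ)) (y : ℝ) :
    ∫ u in Ioi (0 : ℝ), 𝓕 φ (u - y) * h u =
      𝓕 (fun t : ℝ => φ t * G (2 * Real.pi * t * I)) (-y) := by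
  have hcont : ContinuousOn (fun ε : ℝ => 𝓕 (fun t : ℝ => φ t * G (ε + 2 * Real.pi * t * I)) (-y))
      (Ici 0) := by
    simp only [Real.fourier_real_eq]
    refine continuousOn_integral_of_compact_support hφs ?_ fun ε t _ ht => by
      simp [image_eq_zero_of_notMem_tsupport ht]
    have hGline : ContinuousOn (fun p : ℝ × ℝ => G (p.1 + 2 * Real.pi * p.2 * I))
        (Ici 0 ×ˢ univ) :=
      hGc.comp (by fun_prop) fun p hp => by simpa using hp.1
    have hchar : Continuous fun p : ℝ × ℝ => Real.fourierChar (-(p.2 * -y)) :=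
      Real.continuous_fourierChar.comp (by fun_prop)
    exact hchar.continuousOn.smul ((hφc.comp continuous_snd).continuousOn.mul hGline)
  have hright : Tendsto (fun ε : ℝ => 𝓕 (fun t : ℝ => φ t * G (ε + 2 * Real.pi * t * I)) (-y))
      (𝓝[>] 0) (𝓝 (𝓕 (fun t : ℝ => φ t * G (2 * Real.pi * t * I)) (-y))) := by
    simpa using ((hcont 0 self_mem_Ici).mono Ioi_subset_Ici_self).tendsto
  refine tendsto_nhds_unique (tendsto_integral_Ioi_mul_cexp_mul hm hC (hφ.comp_sub_right y))
    (hright.congr' ?_)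
  filter_upwards [self_mem_nhdsWithin] with ε hε
  exact (integral_Ioi_fourier_mul_cexp_mul hm hC hG
    (hφc.integrable_of_hasCompactSupport hφs) y hε).symm

theorem tendsto_integral_Ioi_fourier_mul (hm : Measurable h) (hC : ∀ u, ‖h u‖ ≤ C)
    (hG : ∀ w : ℂ, 0 < w.re → ∫ u in Ioi (0 : ℝ), cexp (-w * u) * h u = G w)
    (hGc : ContinuousOn G {w | 0 ≤ w.re}) {φ : ℝ → ℂ} (hφc : Continuous φ)
    (hφs : HasCompactSupport φ) (hφ : Integrable (𝓕 φ)) :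
    Tendsto (fun y => ∫ u in Ioi (0 : ℝ), 𝓕 φ (u - y) * h u) atTop (𝓝 0) := by
  simp only [integral_Ioi_fourier_mul hm hC hG hGc hφc hφs hφ]
  have hneg : Tendsto (fun y : ℝ => -y) atTop (cocompact ℝ) :=
    tendsto_neg_atTop_atBot.mono_right atBot_le_cocompact
  exact (Real.zero_at_infty_fourier _).comp hneg

end BoundaryValue

section FourierKernel

open MeasureTheory Filter Topology Complex Set FourierTransform ComplexConjugate
open scoped Convolution ContDiff

theorem conj_fourier_ofReal_of_even {f : ℝ → ℝ} (hf : ∀ t, f (-t) = f t) (v : ℝ) :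
    conj (𝓕 (fun t => (f t : ℂ)) v) = 𝓕 (fun t => (f t : ℂ)) v := by
  rw [Real.fourier_real_eq_integral_exp_smul, ← integral_conj, ← integral_neg_eq_self]
  congr 1 with t
  rw [smul_eq_mul, map_mul, ← Complex.exp_conj, hf, conj_ofReal, map_mul, conj_I, conj_ofReal,
    smul_eq_mul]
  congr 2
  push_cast
  ring

/-- Nonnegative kernels on the Fourier side come from autocorrelations: `𝓕 (f ⋆ f) = (𝓕 f) ^ 2`,
and `𝓕 f` is real for an even real bump `f`. -/
theorem exists_fourier_eq_ofReal_nonneg :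
    ∃ (φ : ℝ → ℂ) (K : ℝ → ℝ), Continuous φ ∧ HasCompactSupport φ ∧ (∀ v, 𝓕 φ v = K v) ∧
      (∀ v, 0 ≤ K v) ∧ Integrable K ∧ 0 < ∫ v, K v := by
  let b : ContDiffBump (0 : ℝ) := ⟨1, 2, one_pos, one_lt_two⟩
  let f : ℝ → ℂ := fun t => (b t : ℂ)
  have hfs : HasCompactSupport f := b.hasCompactSupport.comp_left ofReal_zero
  have hfd : ContDiff ℝ ∞ f := ofRealCLM.contDiff.comp b.contDiff
  have hf : Integrable f := hfd.continuous.integrable_of_hasCompactSupport hfs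
  let g : SchwartzMap ℝ ℂ := 𝓕 (hfs.toSchwartzMap hfd)
  have hg : ∀ v, 𝓕 f v = g v := fun v => rfl
  have hreal : ∀ v, ((g v).re : ℂ) = g v := fun v => by
    rw [← conj_eq_iff_re, ← hg, conj_fourier_ofReal_of_even b.neg]
  have hgc : Continuous fun v => (g v).re := continuous_re.comp g.continuous
  have hg2 : Integrable fun v => (g v).re ^ 2 :=
    (g.memLp 2).re.integrable_sq
  refine ⟨f ⋆[ContinuousLinearMap.mul ℂ ℂ] f, fun v => (g v).re ^ 2,
    hfs.continuous_convolution_right _ hf.locallyIntegrable hfd.continuous,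
    hfs.convolution _ hfs, fun v => ?_, fun v => sq_nonneg _, hg2, ?_⟩
  · rw [Real.fourier_mul_convolution_eq hf hf, hg, ofReal_pow, hreal, sq]
  · refine integral_pos_of_integrable_nonneg_nonzero (x := 0) (hgc.pow 2) hg2
      (fun v => sq_nonneg _) (pow_ne_zero 2 fun h0 => ?_)
    have hzero : 𝓕 f 0 = 0 := by rw [hg, ← hreal, h0, ofReal_zero]
    simp only [Real.fourier_real_eq, mul_zero, neg_zero, AddChar.map_zero_eq_one, one_smul, f,
      integral_complex_ofReal, ofReal_eq_zero] at hzero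
    exact (b.integral_pos (μ := volume)).ne' hzero

end FourierKernel

section Tauberian

open MeasureTheory Filter Topology Set

section Window

variable {B K : ℝ → ℝ} {C c : ℝ}

theorem le_exp_mul_of_monotone_mul_exp (hB0 : ∀ u, 0 ≤ B u)
    (hmono : Monotone fun u => B u * Real.exp u) {x y r : ℝ} (hxy : x ≤ y) (hyx : y ≤ x + r) :
    B x ≤ Real.exp r * B y := by
  have h : B x * Real.exp x ≤ B y * Real.exp (x + r) :=
    (hmono hxy).trans (mul_le_mul_of_nonneg_left (Real.exp_le_exp.2 hyx) (hB0 y))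
  rw [Real.exp_add] at h
  exact le_of_mul_le_mul_right (by linarith) (Real.exp_pos x)

theorem measurable_of_monotone_mul_exp (hmono : Monotone fun u => B u * Real.exp u) :
    Measurable B := by
  have : Measurable fun u => B u * Real.exp u * Real.exp (-u) :=
    hmono.measurable.mul (by fun_prop)
  simpa [mul_assoc, ← Real.exp_add] using this

theorem integrable_mul_comp_of_bounded (hm : Measurable B) (hBC : ∀ u, |B u| ≤ C)
    (hK : Integrable K) (y T : ℝ) : Integrable fun v => K v * B (y + v / T) :=
  hK.mul_bdd (hm.comp (by fun_prop)).aestronglyMeasurable (Eventually.of_forall fun _ => hBC _)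

theorem tendsto_setIntegral_Icc_neg (hK : Integrable K) :
    Tendsto (fun R : ℝ => ∫ v in Icc (-R) R, K v) atTop (𝓝 (∫ v, K v)) :=
  (aecover_Icc tendsto_neg_atTop_atBot tendsto_id).integral_tendsto_of_countably_generated hK

theorem abs_div_sq_le_one_div {R v : ℝ} (hR : 0 < R) (hv : |v| ≤ R) : |v / R ^ 2| ≤ 1 / R := by
  rw [abs_div, abs_of_pos (by positivity : 0 < R ^ 2), div_le_div_iff₀ (by positivity) hR]
  nlinarith

/-- With the kernel scaled by `R ^ 2`, the window `|v| ≤ R` moves the argument by at most `1 / R`;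
the extra shift by `1 / R` puts the whole window on one side of `x`. -/
theorem mul_setIntegral_le_exp_mul_integral (hB0 : ∀ u, 0 ≤ B u) (hBC : ∀ u, B u ≤ C)
    (hmono : Monotone fun u => B u * Real.exp u) (hK0 : ∀ v, 0 ≤ K v) (hK : Integrable K)
    {R : ℝ} (hR : 0 < R) (x : ℝ) :
    B x * ∫ v in Icc (-R) R, K v ≤
      Real.exp (2 / R) * ∫ v, K v * B (x + 1 / R + v / R ^ 2) := by
  have hint : Integrable fun v => K v * B (x + 1 / R + v / R ^ 2) :=
    integrable_mul_comp_of_bounded (measurable_of_monotone_mul_exp hmono)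
      (fun u => (abs_of_nonneg (hB0 u)).trans_le (hBC u)) hK _ _
  calc B x * ∫ v in Icc (-R) R, K v = ∫ v in Icc (-R) R, B x * K v := (integral_const_mul _ _).symm
    _ ≤ ∫ v in Icc (-R) R, Real.exp (2 / R) * (K v * B (x + 1 / R + v / R ^ 2)) := by
        refine setIntegral_mono_on (hK.const_mul _).integrableOn (hint.const_mul _).integrableOn
          measurableSet_Icc fun v hv => ?_
        obtain ⟨hlow, hhigh⟩ := abs_le.1 (abs_div_sq_le_one_div hR (abs_le.2 hv))
        have hB : B x ≤ Real.exp (2 / R) * B (x + 1 / R + v / R ^ 2) :=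
          le_exp_mul_of_monotone_mul_exp hB0 hmono (by linarith)
            (by linarith [show 2 / R = 1 / R + 1 / R by ring])
        calc B x * K v ≤ Real.exp (2 / R) * B (x + 1 / R + v / R ^ 2) * K v :=
              mul_le_mul_of_nonneg_right hB (hK0 v)
          _ = Real.exp (2 / R) * (K v * B (x + 1 / R + v / R ^ 2)) := by ring
    _ ≤ ∫ v, Real.exp (2 / R) * (K v * B (x + 1 / R + v / R ^ 2)) :=
        setIntegral_le_integral (hint.const_mul _) (Eventually.of_forall fun v =>
          mul_nonneg (Real.exp_pos _).le (mul_nonneg (hK0 v) (hB0 _)))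
    _ = Real.exp (2 / R) * ∫ v, K v * B (x + 1 / R + v / R ^ 2) := integral_const_mul _ _

theorem integral_sub_le_exp_mul_mul_integral (hB0 : ∀ u, 0 ≤ B u) (hBC : ∀ u, B u ≤ C)
    (hmono : Monotone fun u => B u * Real.exp u) (hK0 : ∀ v, 0 ≤ K v) (hK : Integrable K)
    {R : ℝ} (hR : 0 < R) (x : ℝ) :
    (∫ v, K v * B (x - 1 / R + v / R ^ 2)) - C * ((∫ v, K v) - ∫ v in Icc (-R) R, K v) ≤
      Real.exp (2 / R) * B x * ∫ v, K v := by
  have hint : Integrable fun v => K v * B (x - 1 / R + v / R ^ 2) :=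
    integrable_mul_comp_of_bounded (measurable_of_monotone_mul_exp hmono)
      (fun u => (abs_of_nonneg (hB0 u)).trans_le (hBC u)) hK _ _
  have hinside : ∫ v in Icc (-R) R, K v * B (x - 1 / R + v / R ^ 2) ≤
      ∫ v, Real.exp (2 / R) * B x * K v := by
    refine (setIntegral_mono_on hint.integrableOn (hK.const_mul _).integrableOn measurableSet_Icc
      fun v hv => ?_).trans (setIntegral_le_integral (hK.const_mul _) (Eventually.of_forall fun v =>
        mul_nonneg (mul_nonneg (Real.exp_pos _).le (hB0 x)) (hK0 v)))
    obtain ⟨hlow, hhigh⟩ := abs_le.1 (abs_div_sq_le_one_div hR (abs_le.2 hv))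
    have hB : B (x - 1 / R + v / R ^ 2) ≤ Real.exp (2 / R) * B x :=
      le_exp_mul_of_monotone_mul_exp hB0 hmono (by linarith)
        (by linarith [show 2 / R = 1 / R + 1 / R by ring])
    rw [mul_comm]
    exact mul_le_mul_of_nonneg_right hB (hK0 v)
  have houtside : ∫ v in (Icc (-R) R)ᶜ, K v * B (x - 1 / R + v / R ^ 2) ≤
      ∫ v in (Icc (-R) R)ᶜ, C * K v :=
    setIntegral_mono hint.integrableOn (hK.const_mul _).integrableOn fun v => by
      rw [mul_comm]
      exact mul_le_mul_of_nonneg_right (hBC _) (hK0 v)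
  rw [integral_const_mul] at hinside houtside
  have hsplitB := integral_add_compl (measurableSet_Icc (a := -R) (b := R)) hint
  have hsplitK := integral_add_compl (measurableSet_Icc (a := -R) (b := R)) hK
  rw [← hsplitK, add_sub_cancel_left, hsplitK]
  linarith

theorem tendsto_of_tendsto_integral_mul (hB0 : ∀ u, 0 ≤ B u) (hBC : ∀ u, B u ≤ C)
    (hmono : Monotone fun u => B u * Real.exp u) (hK0 : ∀ v, 0 ≤ K v) (hK : Integrable K)
    (hKpos : 0 < ∫ v, K v)
    (hconv : ∀ T > 0, Tendsto (fun y => ∫ v, K v * B (y + v / T)) atTop (𝓝 (c * ∫ v, K v))) :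
    Tendsto B atTop (𝓝 c) := by
  have hexp : Tendsto (fun R : ℝ => Real.exp (2 / R)) atTop (𝓝 1) := by
    simpa [Function.comp_def] using (Real.continuous_exp.tendsto 0).comp
      (tendsto_const_nhds.div_atTop tendsto_id)
  have hwin := tendsto_setIntegral_Icc_neg hK
  refine tendsto_order.2 ⟨fun b hb => ?_, fun a ha => ?_⟩
  · obtain ⟨R, hbR, hR⟩ : ∃ R : ℝ, Real.exp (2 / R) * b * (∫ v, K v) <
        c * (∫ v, K v) - C * ((∫ v, K v) - ∫ v in Icc (-R) R, K v) ∧ 0 < R := by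
      refine (((hexp.mul_const b).mul_const _).eventually_lt
        (((hwin.const_sub _).const_mul C).const_sub _) ?_ |>.and (eventually_gt_atTop 0)).exists
      simpa using mul_lt_mul_of_pos_right hb hKpos
    have hlim : Tendsto (fun x => (∫ v, K v * B (x - 1 / R + v / R ^ 2)) -
        C * ((∫ v, K v) - ∫ v in Icc (-R) R, K v)) atTop _ :=
      ((hconv (R ^ 2) (by positivity)).comp
        (tendsto_atTop_add_const_right _ (-(1 / R)) tendsto_id)).sub_const _
    filter_upwards [hlim.eventually_const_lt hbR] with x hx
    have := hx.trans_le (integral_sub_le_exp_mul_mul_integral hB0 hBC hmono hK0 hK hR x)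
    exact lt_of_mul_lt_mul_left (lt_of_mul_lt_mul_right this hKpos.le) (Real.exp_pos _).le
  · obtain ⟨R, haR, hR, hpos⟩ : ∃ R : ℝ, Real.exp (2 / R) * (c * ∫ v, K v) <
        a * (∫ v in Icc (-R) R, K v) ∧ 0 < R ∧ 0 < ∫ v in Icc (-R) R, K v := by
      refine ((hexp.mul_const _).eventually_lt (hwin.const_mul a) ?_ |>.and
        ((eventually_gt_atTop 0).and (hwin.eventually_const_lt hKpos))).exists
      simpa using mul_lt_mul_of_pos_right ha hKpos
    have hlim : Tendsto (fun x => Real.exp (2 / R) * ∫ v, K v * B (x + 1 / R + v / R ^ 2))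
        atTop _ :=
      ((hconv (R ^ 2) (by positivity)).comp
        (tendsto_atTop_add_const_right _ (1 / R) tendsto_id)).const_mul _
    filter_upwards [hlim.eventually_lt_const haR] with x hx
    exact lt_of_mul_lt_mul_right
      ((mul_setIntegral_le_exp_mul_integral hB0 hBC hmono hK0 hK hR x).trans_lt hx) hpos.le

end Window

section Laplace

open Complex FourierTransform

variable {B K : ℝ → ℝ} {C c : ℝ}

theorem abs_indicator_le {g : ℝ → ℝ} (hg : ∀ u, |g u| ≤ C) (s : Set ℝ) (u : ℝ) :
    |s.indicator g u| ≤ C :=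
  (norm_indicator_le_norm_self g u).trans (hg u)

theorem tendsto_integral_mul_indicator_Iic_comp_add {g : ℝ → ℝ} (hm : Measurable g)
    (hg : ∀ u, |g u| ≤ C) (hK : Integrable K) :
    Tendsto (fun y => ∫ v, K v * (Iic 0).indicator g (y + v)) atTop (𝓝 0) := by
  rw [← integral_zero ℝ ℝ (μ := volume)]
  refine tendsto_integral_filter_of_dominated_convergence (fun v => ‖K v‖ * C)
    (Eventually.of_forall fun y => hK.aestronglyMeasurable.mul
      ((hm.indicator measurableSet_Iic).comp (measurable_const_add y)).aestronglyMeasurable)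
    (Eventually.of_forall fun y => Eventually.of_forall fun v => ?_) (hK.norm.mul_const _)
    (Eventually.of_forall fun v => tendsto_const_nhds.congr' ?_)
  · rw [norm_mul]
    exact mul_le_mul_of_nonneg_left (abs_indicator_le hg _ _) (norm_nonneg _)
  · filter_upwards [eventually_gt_atTop (-v)] with y hy
    simp [show ¬ y + v ≤ 0 by linarith]

theorem tendsto_integral_mul_comp_add (hm : Measurable B) (hBC : ∀ u, |B u| ≤ C)
    (hK : Integrable K)
    (hlim : Tendsto (fun y => ∫ u in Ioi (0 : ℝ), K (u - y) * (B u - c)) atTop (𝓝 0)) :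
    Tendsto (fun y => ∫ v, K v * B (y + v)) atTop (𝓝 (c * ∫ v, K v)) := by
  let g : ℝ → ℝ := fun u => B u - c
  have hg_m : Measurable g := hm.sub_const c
  have hg : ∀ u, |g u| ≤ C + |c| := fun u => (abs_sub _ _).trans (by gcongr; exact hBC u)
  have hint : ∀ {s : Set ℝ}, MeasurableSet s → ∀ y,
      Integrable fun v => K v * s.indicator g (y + v) := fun hs y => by
    simpa using integrable_mul_comp_of_bounded (hg_m.indicator hs) (abs_indicator_le hg _) hK y 1
  have hright : ∀ y, ∫ u in Ioi (0 : ℝ), K (u - y) * g u =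
      ∫ v, K v * (Ioi 0).indicator g (y + v) := fun y => by
    rw [← integral_indicator measurableSet_Ioi, ← integral_add_left_eq_self _ y]
    simp only [indicator_mul_right, add_sub_cancel_left]
  have hsum := ((tendsto_integral_mul_indicator_Iic_comp_add hg_m hg hK).add
    (hlim.congr hright)).add_const (c * ∫ v, K v)
  simp only [add_zero, zero_add] at hsum
  refine hsum.congr fun y => ?_
  have hIic := hint (measurableSet_Iic (a := 0)) y
  have hIoi := hint (measurableSet_Ioi (a := 0)) y
  have hsum_int : Integrable fun v =>
      K v * (Iic 0).indicator g (y + v) + K v * (Ioi 0).indicator g (y + v) := hIic.add hIoi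
  rw [← integral_const_mul, ← integral_add hIic hIoi, ← integral_add hsum_int (hK.const_mul c)]
  refine integral_congr_ae (Eventually.of_forall fun v => ?_)
  have hB : (Iic 0).indicator g (y + v) + (Ioi 0).indicator g (y + v) = B (y + v) - c := by
    rw [← compl_Iic]
    exact congrFun (indicator_self_add_compl (Iic 0) g) (y + v)
  linear_combination K v * hB

theorem integral_Ioi_cexp_mul_comp_div {h : ℝ → ℂ} {G : ℂ → ℂ}
    (hG : ∀ w : ℂ, 0 < w.re → ∫ u in Ioi (0 : ℝ), cexp (-w * u) * h u = G w)
    {T : ℝ} (hT : 0 < T) {w : ℂ} (hw : 0 < w.re) :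
    ∫ u in Ioi (0 : ℝ), cexp (-w * u) * h (u / T) = T * G (T * w) := by
  rw [← hG (T * w) (by simpa using mul_pos hT hw)]
  have := integral_comp_mul_left_Ioi' (fun u : ℝ => cexp (-w * u) * h (u / T)) 0 hT
  rw [mul_zero] at this
  rw [← this, real_smul]
  congr 2 with u
  rw [mul_div_cancel_left₀ _ hT.ne']
  push_cast
  ring_nf

theorem tendsto_integral_mul_of_laplace (hm : Measurable B) (hBC : ∀ u, |B u| ≤ C) {G : ℂ → ℂ}
    (hG : ∀ w : ℂ, 0 < w.re → ∫ u in Ioi (0 : ℝ), cexp (-w * u) * ((B u - c : ℝ) : ℂ) = G w)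
    (hGc : ContinuousOn G {w | 0 ≤ w.re}) {φ : ℝ → ℂ} (hφc : Continuous φ)
    (hφs : HasCompactSupport φ) (hφK : ∀ v, 𝓕 φ v = K v) (hK : Integrable K)
    {T : ℝ} (hT : 0 < T) :
    Tendsto (fun y => ∫ v, K v * B (y + v / T)) atTop (𝓝 (c * ∫ v, K v)) := by
  have hφ : Integrable (𝓕 φ) := (funext hφK : 𝓕 φ = _) ▸ hK.ofReal
  have hscaled := tendsto_integral_Ioi_fourier_mul (h := fun u => ((B (u / T) - c : ℝ) : ℂ))
    (C := C + |c|) (by fun_prop)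
    (fun u => by
      rw [norm_real]
      exact (abs_sub _ _).trans (by gcongr; exact hBC _))
    (G := fun w => T * G (T * w)) (fun w hw => integral_Ioi_cexp_mul_comp_div hG hT hw)
    (continuousOn_const.mul (hGc.comp (by fun_prop) fun w hw => by
      simpa using mul_nonneg hT.le hw))
    hφc hφs hφ
  simp only [hφK, ← ofReal_mul, integral_complex_ofReal, ← ofReal_zero, tendsto_ofReal_iff]
    at hscaled
  have hconv := tendsto_integral_mul_comp_add (B := fun u => B (u / T)) (hm.comp (by fun_prop))
    (fun u => hBC _) hK hscaled
  refine (hconv.comp (tendsto_id.const_mul_atTop hT)).congr fun y => ?_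
  simp [add_div, hT.ne']

/-- The **Wiener–Ikehara theorem** for Laplace transforms. -/
theorem tendsto_of_laplace_continuousOn (hB0 : ∀ u, 0 ≤ B u) (hBC : ∀ u, B u ≤ C)
    (hmono : Monotone fun u => B u * Real.exp u) {G : ℂ → ℂ}
    (hG : ∀ w : ℂ, 0 < w.re → ∫ u in Ioi (0 : ℝ), cexp (-w * u) * ((B u - c : ℝ) : ℂ) = G w)
    (hGc : ContinuousOn G {w | 0 ≤ w.re}) :
    Tendsto B atTop (𝓝 c) := by
  obtain ⟨φ, K, hφc, hφs, hφK, hK0, hK, hKpos⟩ := exists_fourier_eq_ofReal_nonneg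
  exact tendsto_of_tendsto_integral_mul hB0 hBC hmono hK0 hK hKpos fun T hT =>
    tendsto_integral_mul_of_laplace (measurable_of_monotone_mul_exp hmono)
      (fun u => (abs_of_nonneg (hB0 u)).trans_le (hBC u)) hG hGc hφc hφs hφK hK hT

end Laplace

end Tauberian

section DirichletSeries

open MeasureTheory Filter Topology Set Complex

theorem integral_Ioi_one_mul_cpow (g : ℝ → ℂ) (s : ℂ) :
    ∫ t in Ioi (1 : ℝ), g t * (t : ℂ) ^ (-(s + 1)) =
      ∫ u in Ioi (0 : ℝ), cexp (-s * u) * g (Real.exp u) := by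
  have himage : Real.exp '' Ioi 0 = Ioi 1 := by
    ext x
    refine ⟨?_, fun hx => ⟨Real.log x, Real.log_pos hx, Real.exp_log (one_pos.trans hx)⟩⟩
    rintro ⟨u, hu, rfl⟩
    exact Real.one_lt_exp_iff.2 hu
  rw [← himage, integral_image_eq_integral_abs_deriv_smul measurableSet_Ioi
    (fun x _ => (Real.hasDerivAt_exp x).hasDerivWithinAt) Real.exp_injective.injOn]
  refine setIntegral_congr_fun measurableSet_Ioi fun u _ => ?_
  have hexp : cexp u * cexp (u * -(s + 1)) = cexp (-s * u) := by
    rw [← Complex.exp_add]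
    ring_nf
  simp only [abs_of_pos (Real.exp_pos u), real_smul]
  rw [cpow_def_of_ne_zero (by simp), ← ofReal_log (Real.exp_pos u).le, Real.log_exp, ofReal_exp]
  linear_combination g (Real.exp u) * hexp

variable {f : ℕ → ℝ} {C c : ℝ}

theorem sum_Icc_floor_exp_mul_exp_neg_le (hC : ∀ n : ℕ, ∑ k ∈ Finset.Icc 1 n, f k ≤ C * n)
    (hC0 : 0 ≤ C) (u : ℝ) :
    (∑ k ∈ Finset.Icc 1 ⌊Real.exp u⌋₊, f k) * Real.exp (-u) ≤ C := by
  rw [Real.exp_neg, ← div_eq_mul_inv, div_le_iff₀ (Real.exp_pos u)]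
  exact (hC _).trans (mul_le_mul_of_nonneg_left (Nat.floor_le (Real.exp_pos u).le) hC0)

theorem sum_Icc_floor_exp_mul_exp_neg_nonneg (hf : ∀ n, 0 ≤ f n) (u : ℝ) :
    0 ≤ (∑ k ∈ Finset.Icc 1 ⌊Real.exp u⌋₊, f k) * Real.exp (-u) :=
  mul_nonneg (Finset.sum_nonneg fun n _ => hf n) (Real.exp_pos _).le

theorem monotone_sum_Icc_floor_exp (hf : ∀ n, 0 ≤ f n) :
    Monotone fun u : ℝ => ∑ k ∈ Finset.Icc 1 ⌊Real.exp u⌋₊, f k := fun _ _ huv =>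
  Finset.sum_le_sum_of_subset_of_nonneg
    (Finset.Icc_subset_Icc_right (Nat.floor_le_floor (Real.exp_le_exp.2 huv))) fun n _ _ => hf n

theorem LSeries_one_add_eq_mul_laplace (hf : ∀ n, 0 ≤ f n)
    (hC : ∀ n : ℕ, ∑ k ∈ Finset.Icc 1 n, f k ≤ C * n) {w : ℂ} (hw : 0 < w.re) :
    LSeries (fun n => (f n : ℂ)) (1 + w) = (1 + w) * ∫ u in Ioi (0 : ℝ),
      cexp (-w * u) * (((∑ k ∈ Finset.Icc 1 ⌊Real.exp u⌋₊, f k) * Real.exp (-u) : ℝ) : ℂ) := by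
  have hO : (fun n : ℕ => ∑ k ∈ Finset.Icc 1 n, f k) =O[atTop] fun n => (n : ℝ) ^ (1 : ℝ) := by
    refine Asymptotics.IsBigO.of_bound C (Eventually.of_forall fun n => ?_)
    rw [Real.norm_of_nonneg (Finset.sum_nonneg fun k _ => hf k), Real.rpow_one, Real.norm_natCast]
    exact hC n
  rw [LSeries_eq_mul_integral_of_nonneg f zero_le_one (by simpa) hO hf, integral_Ioi_one_mul_cpow
    (fun t => ∑ k ∈ Finset.Icc 1 ⌊t⌋₊, (f k : ℂ))]
  congr 2 with u
  have hexp : cexp (-(1 + w) * u) = cexp (-w * u) * cexp (-u) := by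
    rw [← Complex.exp_add]
    ring_nf
  rw [hexp]
  push_cast
  ring

theorem integral_Ioi_cexp_mul_const {w : ℂ} (hw : 0 < w.re) (c : ℂ) :
    ∫ u in Ioi (0 : ℝ), cexp (-w * u) * c = c / w := by
  rw [integral_mul_const, integral_exp_mul_complex_Ioi (by simpa using hw)]
  simp [div_eq_mul_inv, mul_comm]

theorem laplace_sub_const_eq (hf : ∀ n, 0 ≤ f n)
    (hC : ∀ n : ℕ, ∑ k ∈ Finset.Icc 1 n, f k ≤ C * n) (hC0 : 0 ≤ C) {w : ℂ} (hw : 0 < w.re) :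
    ∫ u in Ioi (0 : ℝ), cexp (-w * u) *
        (((∑ k ∈ Finset.Icc 1 ⌊Real.exp u⌋₊, f k) * Real.exp (-u) - c : ℝ) : ℂ) =
      (LSeries (fun n => (f n : ℂ)) (1 + w) - c / w - c) / (1 + w) := by
  have hw0 : w ≠ 0 := ne_zero_of_re_pos hw
  have h1w : 1 + w ≠ 0 := ne_zero_of_re_pos (by rw [add_re, one_re]; linarith)
  have hm : Measurable fun u : ℝ =>
      (((∑ k ∈ Finset.Icc 1 ⌊Real.exp u⌋₊, f k) * Real.exp (-u) : ℝ) : ℂ) :=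
    measurable_ofReal.comp ((monotone_sum_Icc_floor_exp hf).measurable.mul (by fun_prop))
  have hint := integrableOn_cexp_neg_mul_mul_of_bounded hm (C := C) (fun u => by
    rw [norm_real, Real.norm_of_nonneg (sum_Icc_floor_exp_mul_exp_neg_nonneg hf u)]
    exact sum_Icc_floor_exp_mul_exp_neg_le hC hC0 u) hw
  have hint_const := integrableOn_cexp_neg_mul_mul_of_bounded (h := fun _ => (c : ℂ))
    measurable_const (fun _ => le_rfl) hw
  rw [LSeries_one_add_eq_mul_laplace hf hC hw]
  simp only [ofReal_sub _ c, mul_sub]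
  rw [integral_sub hint hint_const, integral_Ioi_cexp_mul_const hw]
  field_simp
  ring

/-- The **Wiener–Ikehara theorem** for Dirichlet series. -/
theorem tendsto_sum_div_of_LSeries_sub_pole (hf : ∀ n, 0 ≤ f n)
    (hC : ∀ n : ℕ, ∑ k ∈ Finset.Icc 1 n, f k ≤ C * n) {G : ℂ → ℂ}
    (hGc : ContinuousOn G {s | 1 ≤ s.re})
    (hG : EqOn G (fun s => LSeries (fun n => (f n : ℂ)) s - c / (s - 1)) {s | 1 < s.re}) :
    Tendsto (fun x : ℝ => (∑ k ∈ Finset.Icc 1 ⌊x⌋₊, f k) / x) atTop (𝓝 c) := by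
  have hC0 : 0 ≤ C := by
    simpa using (Finset.sum_nonneg fun n _ => hf n).trans (hC 1)
  have hlim : Tendsto (fun u : ℝ => (∑ k ∈ Finset.Icc 1 ⌊Real.exp u⌋₊, f k) * Real.exp (-u))
      atTop (𝓝 c) := by
    refine tendsto_of_laplace_continuousOn (G := fun w => (G (1 + w) - c) / (1 + w))
      (sum_Icc_floor_exp_mul_exp_neg_nonneg hf) (sum_Icc_floor_exp_mul_exp_neg_le hC hC0)
      (by simpa [mul_assoc, ← Real.exp_add] using monotone_sum_Icc_floor_exp hf)
      (fun w hw => ?_) ?_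
    · rw [laplace_sub_const_eq hf hC hC0 hw, hG (by simpa using hw)]
      simp only [add_sub_cancel_left]
    · refine ((hGc.comp (by fun_prop) fun w hw => by simpa using hw).sub
        continuousOn_const).div (by fun_prop) fun w hw =>
          ne_zero_of_re_pos (by rw [add_re, one_re]; exact add_pos_of_pos_of_nonneg one_pos hw)
  refine (hlim.comp Real.tendsto_log_atTop).congr' ?_
  filter_upwards [eventually_gt_atTop 0] with x hx
  simp [Real.exp_neg, Real.exp_log hx, div_eq_mul_inv]

end DirichletSeries

section ArithmeticProgressions

open Filter Topology ArithmeticFunction.vonMangoldt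

/-- The **prime number theorem in arithmetic progressions**, for the von Mangoldt function. -/
theorem tendsto_sum_residueClass_div {q : ℕ} [NeZero q] {a : ZMod q} (ha : IsUnit a) :
    Tendsto (fun x : ℝ => (∑ k ∈ Finset.Icc 1 ⌊x⌋₊, residueClass a k) / x) atTop
      (𝓝 (q.totient : ℝ)⁻¹) := by
  have hpsi : ∀ n : ℕ, ∑ k ∈ Finset.Icc 1 n, residueClass a k ≤ (Real.log 4 + 4) * n := fun n =>
    calc ∑ k ∈ Finset.Icc 1 n, residueClass a k ≤ Chebyshev.psi n := by
          rw [Chebyshev.psi, Nat.floor_natCast]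
          exact Finset.sum_le_sum fun k _ => residueClass_le a k
      _ ≤ (Real.log 4 + 4) * n := Chebyshev.psi_le_const_mul_self n.cast_nonneg
  refine tendsto_sum_div_of_LSeries_sub_pole (residueClass_nonneg a) hpsi
    (continuousOn_LFunctionResidueClassAux a) ?_
  simpa using eqOn_LFunctionResidueClassAux ha

end ArithmeticProgressions

section PrimeDensity

open Filter Topology
open ArithmeticFunction (vonMangoldt)

/-- The set of primes `P` has natural density `δ` in the primes. The definition does not
require the elements of `P` to be prime: it is meant for sets given by a condition on primes. -/
def HasPrimeDensity (P : Set ℕ) (δ : ℝ) : Prop :=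
  Tendsto (fun x : ℕ => ({p : ℕ | p ∈ P ∧ p ≤ x}.ncard : ℝ) /
    ({p : ℕ | p.Prime ∧ p ≤ x}.ncard : ℝ)) atTop (𝓝 δ)

theorem ncard_setOf_prime_mem_le_eq_sum_indicator (P : Set ℕ) (n : ℕ) :
    ({p : ℕ | (p.Prime ∧ p ∈ P) ∧ p ≤ n}.ncard : ℝ) =
      ∑ p ∈ Nat.primesLE n, P.indicator (fun _ => (1 : ℝ)) p := by
  classical
  have hset : {p : ℕ | (p.Prime ∧ p ∈ P) ∧ p ≤ n} = {p ∈ Nat.primesLE n | p ∈ P} := by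
    ext p
    simp only [Finset.coe_filter, Nat.mem_primesLE, Set.mem_ofPred_eq]
    tauto
  rw [hset, Set.ncard_coe_finset]
  simp [Set.indicator_apply]

theorem tendsto_primeCounting_mul_log_sub_theta_div :
    Tendsto (fun n : ℕ => (Nat.primeCounting n * Real.log n - Chebyshev.theta n) / n)
      atTop (𝓝 0) := by
  have hbound := Chebyshev.primeCounting_sub_theta_div_log_isBigO.mul
    (Asymptotics.isBigO_refl (fun x : ℝ => Real.log x / x) atTop)
  have hlim : Tendsto (fun x : ℝ => x / Real.log x ^ 2 * (Real.log x / x)) atTop (𝓝 0) := by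
    refine Real.tendsto_log_atTop.inv_tendsto_atTop.congr' ?_
    filter_upwards [eventually_gt_atTop 1] with x hx
    have hlog := Real.log_pos hx
    rw [Pi.inv_apply]
    field_simp
  refine ((hbound.trans_tendsto hlim).comp tendsto_natCast_atTop_atTop).congr' ?_
  filter_upwards [eventually_gt_atTop 1] with n hn
  have hlog := Real.log_pos (Nat.one_lt_cast.2 hn)
  simp only [Function.comp_apply, Nat.floor_natCast]
  field_simp

theorem tendsto_psi_sub_theta_div :
    Tendsto (fun n : ℕ => (Chebyshev.psi n - Chebyshev.theta n) / n) atTop (𝓝 0) := by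
  have hbound := Chebyshev.isBigO_psi_sub_theta_sqrt.mul
    (Asymptotics.isBigO_refl (fun x : ℝ => x⁻¹) atTop)
  have hlim : Tendsto (fun x : ℝ => √x * x⁻¹) atTop (𝓝 0) :=
    Real.tendsto_sqrt_atTop.inv_tendsto_atTop.congr fun x => by
      rw [Pi.inv_apply, ← div_eq_mul_inv, Real.sqrt_div_self']
      simp
  exact ((hbound.trans_tendsto hlim).comp tendsto_natCast_atTop_atTop).congr fun n =>
    (div_eq_mul_inv _ _).symm

theorem abs_sum_indicator_le_sum {ι : Type*} {s : Finset ι} (P : Set ι) {g : ι → ℝ}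
    (hg : ∀ i ∈ s, 0 ≤ g i) : |∑ i ∈ s, P.indicator g i| ≤ ∑ i ∈ s, g i := by
  rw [abs_of_nonneg (Finset.sum_nonneg fun i hi => Set.indicator_apply_nonneg fun _ => hg i hi)]
  exact Finset.sum_le_sum fun i hi => Set.indicator_apply_le' (fun _ => le_rfl) fun _ => hg i hi

theorem abs_sum_primesLE_indicator_mul_log_sub_le (P : Set ℕ) (n : ℕ) :
    |(∑ p ∈ Nat.primesLE n, P.indicator (fun _ => (1 : ℝ)) p) * Real.log n -
        ∑ p ∈ Nat.primesLE n, P.indicator (fun p => Real.log p) p| ≤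
      Nat.primeCounting n * Real.log n - Chebyshev.theta n := by
  calc _ = |∑ p ∈ Nat.primesLE n, P.indicator (fun p => Real.log n - Real.log p) p| := by
        rw [Finset.sum_mul, ← Finset.sum_sub_distrib]
        congr! 2 with p
        by_cases hp : p ∈ P <;> simp [hp]
    _ ≤ ∑ p ∈ Nat.primesLE n, (Real.log n - Real.log p) :=
        abs_sum_indicator_le_sum P fun p hp => by
          rw [Nat.mem_primesLE] at hp
          exact sub_nonneg.2 (Real.log_le_log (Nat.cast_pos.2 hp.2.pos) (Nat.cast_le.2 hp.1))
    _ = _ := by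
        rw [Finset.sum_sub_distrib, Finset.sum_const, nsmul_eq_mul,
          Nat.primesLE_card_eq_primeCounting, Chebyshev.theta_eq_sum_primesLE_log]

theorem abs_sum_indicator_vonMangoldt_sub_le (P : Set ℕ) (n : ℕ) :
    |(∑ k ∈ Finset.Icc 1 n, P.indicator vonMangoldt k) -
        ∑ p ∈ Nat.primesLE n, P.indicator (fun p => Real.log p) p| ≤
      Chebyshev.psi n - Chebyshev.theta n := by
  have hsplit : ∑ k ∈ Finset.Icc 1 n, P.indicator vonMangoldt k =
      (∑ p ∈ Nat.primesLE n, P.indicator (fun p => Real.log p) p) +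
        ∑ k ∈ Finset.Ioc 0 n with ¬ k.Prime, P.indicator vonMangoldt k := by
    change ∑ k ∈ Finset.Ioc 0 n, _ = _
    rw [← Finset.sum_filter_add_sum_filter_not _ Nat.Prime, Nat.primesLE_eq_filter_Ioc_zero]
    congr 1
    refine Finset.sum_congr rfl fun p hp => ?_
    by_cases hpP : p ∈ P <;>
      simp [hpP, ArithmeticFunction.vonMangoldt_apply_prime (Finset.mem_filter.1 hp).2]
  rw [hsplit, add_sub_cancel_left, Chebyshev.psi_sub_theta_eq_sum_not_prime, Nat.floor_natCast]
  exact abs_sum_indicator_le_sum P fun _ _ => ArithmeticFunction.vonMangoldt_nonneg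

theorem tendsto_ncard_prime_mul_log_div {P : Set ℕ} {c : ℝ}
    (h : Tendsto (fun n : ℕ => (∑ k ∈ Finset.Icc 1 n, P.indicator vonMangoldt k) / n)
      atTop (𝓝 c)) :
    Tendsto (fun n : ℕ => {p : ℕ | (p.Prime ∧ p ∈ P) ∧ p ≤ n}.ncard * (Real.log n / n))
      atTop (𝓝 c) := by
  simp only [ncard_setOf_prime_mem_le_eq_sum_indicator]
  have hdiv {a b : ℕ → ℝ} (hab : ∀ n, |a n| ≤ b n)
      (hb : Tendsto (fun n : ℕ => b n / n) atTop (𝓝 0)) :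
      Tendsto (fun n : ℕ => a n / n) atTop (𝓝 0) :=
    squeeze_zero_norm (fun n => by
      rw [Real.norm_eq_abs, abs_div, Nat.abs_cast]
      gcongr
      exact hab n) hb
  have hcount := hdiv (abs_sum_primesLE_indicator_mul_log_sub_le P)
    tendsto_primeCounting_mul_log_sub_theta_div
  have hpsi := hdiv (abs_sum_indicator_vonMangoldt_sub_le P) tendsto_psi_sub_theta_div
  simpa using ((hcount.sub hpsi).add h).congr fun n => by ring

theorem tendsto_sum_indicator_preimage_vonMangoldt_div {q : ℕ} [NeZero q]
    {H : Finset (ZMod q)} (hH : ∀ a ∈ H, IsUnit a) :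
    Tendsto (fun n : ℕ => (∑ k ∈ Finset.Icc 1 n,
        {k : ℕ | (k : ZMod q) ∈ H}.indicator vonMangoldt k) / n)
      atTop (𝓝 (H.card / q.totient)) := by
  have hsum := (tendsto_finsetSum H fun a ha => tendsto_sum_residueClass_div (hH a ha)).comp
    tendsto_natCast_atTop_atTop
  rw [Finset.sum_const, nsmul_eq_mul, ← div_eq_mul_inv] at hsum
  refine hsum.congr fun n => ?_
  rw [Function.comp_apply, ← Finset.sum_div, Nat.floor_natCast, Finset.sum_comm]
  congr! 2 with k
  simp [ArithmeticFunction.vonMangoldt.residueClass, Set.indicator_apply]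

theorem hasPrimeDensity_setOf_natCast_mem {q : ℕ} [NeZero q] {H : Finset (ZMod q)}
    (hH : ∀ a ∈ H, IsUnit a) :
    HasPrimeDensity {p | p.Prime ∧ (p : ZMod q) ∈ H} (H.card / q.totient) := by
  have hnum := tendsto_ncard_prime_mul_log_div (tendsto_sum_indicator_preimage_vonMangoldt_div hH)
  have hall : ∀ p : ℕ, (p : ZMod 1) ∈ ({1} : Finset (ZMod 1)) := fun _ =>
    Finset.mem_singleton.2 (Subsingleton.elim _ _)
  have hden := tendsto_ncard_prime_mul_log_div
    (tendsto_sum_indicator_preimage_vonMangoldt_div (q := 1) (H := {1}) (by simp))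
  simp only [Set.mem_ofPred_eq, hall, and_true] at hden
  have hdiv := hnum.div hden (by simp)
  simp only [Finset.card_singleton, Nat.totient_one, Nat.cast_one, div_one] at hdiv
  refine hdiv.congr' ?_
  filter_upwards [eventually_gt_atTop 1] with n hn
  have hlog : Real.log n / n ≠ 0 := by
    have := Real.log_pos (Nat.one_lt_cast.2 hn)
    positivity
  exact mul_div_mul_right _ _ hlog

theorem hasPrimeDensity_setOf_mem_ker {M : ℕ} [NeZero M] {G : Type*} [Group G]
    (Ψ : (ZMod M)ˣ →* G) :
    HasPrimeDensity {p | p.Prime ∧ ∃ u : (ZMod M)ˣ, (u : ZMod M) = p ∧ Ψ u = 1}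
      (Nat.card Ψ.range : ℝ)⁻¹ := by
  classical
  set K : Finset (ZMod M) := (Ψ.ker : Set (ZMod M)ˣ).toFinset.image Units.val with hK
  have hcard : K.card * Nat.card Ψ.range = M.totient := by
    rw [Finset.card_image_of_injective _ Units.val_injective, Set.toFinset_card,
      ← Nat.card_eq_fintype_card, ← Subgroup.index_ker, ← ZMod.card_units_eq_totient,
      ← Nat.card_eq_fintype_card]
    exact Ψ.ker.card_mul_index
  have hlim : (Nat.card Ψ.range : ℝ)⁻¹ = K.card / M.totient := by
    have htot : (M.totient : ℝ) ≠ 0 := by exact_mod_cast (Nat.totient_pos.2 (NeZero.pos M)).ne'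
    rw [← hcard] at htot ⊢
    push_cast at htot ⊢
    rw [div_mul_cancel_left₀ (left_ne_zero_of_mul htot)]
  have hset : {p : ℕ | p.Prime ∧ ∃ u : (ZMod M)ˣ, (u : ZMod M) = p ∧ Ψ u = 1} =
      {p : ℕ | p.Prime ∧ (p : ZMod M) ∈ K} := by
    ext p
    simp [hK, and_comm]
  rw [hset, hlim]
  refine hasPrimeDensity_setOf_natCast_mem fun a ha => ?_
  obtain ⟨u, -, rfl⟩ := Finset.mem_image.1 ha
  exact u.isUnit

end PrimeDensity

section QuadraticSymbols

open scoped NumberTheorySymbols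

theorem odd_of_coprime_of_four_mul_dvd {a M n : ℕ} (h : 4 * a ∣ M) (hn : n.Coprime M) : Odd n :=
  Nat.coprime_two_right.1 (hn.coprime_dvd_right ((Dvd.intro (2 * a) (by ring)).trans h))

theorem jacobiSym_eq_of_modEq {a M m n : ℕ} (h : 4 * a ∣ M) (hm : m.Coprime M)
    (hmn : m ≡ n [MOD M]) : J(a | m) = J(a | n) := by
  have hn : n.Coprime M := hmn.gcd_eq.symm.trans hm
  rw [jacobiSym.mod_right' a (odd_of_coprime_of_four_mul_dvd h hm),
    jacobiSym.mod_right' a (odd_of_coprime_of_four_mul_dvd h hn), hmn.of_dvd h]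

/-- The quadratic symbol `J(a | ·)` as a character of `(ℤ/Mℤ)ˣ`, for `4 * a ∣ M`. -/
def jacobiHom {a M : ℕ} [NeZero M] (h : 4 * a ∣ M) : (ZMod M)ˣ →* ℤˣ :=
  MonoidHom.toHomUnits
    { toFun u := J(a | (u : ZMod M).val)
      map_one' := by
        have hmod : ((1 : (ZMod M)ˣ) : ZMod M).val ≡ 1 [MOD M] := by
          rw [← ZMod.natCast_eq_natCast_iff]
          simp
        rw [jacobiSym_eq_of_modEq h (ZMod.val_coe_unit_coprime 1) hmod, jacobiSym.one_right]
      map_mul' u v := by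
        have hmod : ((u * v : (ZMod M)ˣ) : ZMod M).val ≡
            (u : ZMod M).val * (v : ZMod M).val [MOD M] := by
          rw [← ZMod.natCast_eq_natCast_iff]
          simp
        have hpos (w : (ZMod M)ˣ) : (w : ZMod M).val ≠ 0 :=
          (odd_of_coprime_of_four_mul_dvd h (ZMod.val_coe_unit_coprime w)).pos.ne'
        rw [jacobiSym_eq_of_modEq h (ZMod.val_coe_unit_coprime _) hmod,
          jacobiSym.mul_right' _ (hpos u) (hpos v)] }

theorem coe_jacobiHom {a M n : ℕ} [NeZero M] (h : 4 * a ∣ M) {u : (ZMod M)ˣ}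
    (hu : (u : ZMod M) = n) : (jacobiHom h u : ℤ) = J(a | n) := by
  refine jacobiSym_eq_of_modEq h (ZMod.val_coe_unit_coprime u) ?_
  rw [← ZMod.natCast_eq_natCast_iff, ← hu, ZMod.natCast_zmod_val]

theorem exists_modEq_one_jacobiSym_two_eq_neg_one {N : ℕ} (hN : Odd N) :
    ∃ a, a ≡ 1 [MOD 4 * N] ∧ J(2 | a) = -1 := by
  obtain ⟨a, ha, haN⟩ := Nat.chineseRemainder (hN.coprime_two_left.pow_left 3) 5 1
  have ha8 : a % 8 = 5 := ha
  have ha4 : a ≡ 1 [MOD 4] := by rw [Nat.ModEq]; omega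
  refine ⟨a, (Nat.modEq_and_modEq_iff_modEq_mul (hN.coprime_two_left.pow_left 2)).1 ⟨ha4, haN⟩, ?_⟩
  rw [jacobiSym.at_two (Nat.odd_iff.2 (by omega)), ZMod.χ₈_nat_mod_eight, ha8]
  decide

theorem exists_modEq_one_jacobiSym_odd_prime_eq_neg_one {q N : ℕ} [Fact q.Prime] (hq : q ≠ 2)
    (hqN : q.Coprime N) : ∃ a, a ≡ 1 [MOD 4 * N] ∧ J(q | a) = -1 := by
  have hodd : Odd q := (Fact.out : q.Prime).odd_of_ne_two hq
  obtain ⟨c, hc⟩ := FiniteField.exists_nonsquare (F := ZMod q) (by rwa [ZMod.ringChar_zmod_n])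
  obtain ⟨a, hac, ha⟩ := Nat.chineseRemainder
    (Nat.Coprime.mul_right (hodd.coprime_two_right.pow_right 2) hqN) c.val 1
  have ha4 : a % 4 = 1 := ha.of_dvd (Dvd.intro N rfl)
  refine ⟨a, ha, ?_⟩
  rw [← jacobiSym.quadratic_reciprocity_one_mod_four ha4 hodd,
    ← jacobiSym.legendreSym.to_jacobiSym, legendreSym.eq_neg_one_iff',
    (ZMod.natCast_eq_natCast_iff _ _ _).2 hac, ZMod.natCast_zmod_val]
  exact hc

theorem exists_modEq_one_jacobiSym_prime_eq_neg_one {q N : ℕ} (hq : q.Prime)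
    (hqN : q.Coprime N) : ∃ a, a ≡ 1 [MOD 4 * N] ∧ J(q | a) = -1 := by
  obtain rfl | hq2 := eq_or_ne q 2
  · exact exists_modEq_one_jacobiSym_two_eq_neg_one (Nat.coprime_two_left.1 hqN)
  · have := Fact.mk hq
    exact exists_modEq_one_jacobiSym_odd_prime_eq_neg_one hq2 hqN

theorem exists_jacobiHom_eq_neg_one {q M : ℕ} [NeZero M] (hq : q.Prime) (h : 4 * q ∣ M) :
    ∃ u : (ZMod M)ˣ, jacobiHom h u = -1 ∧
      ∀ {r : ℕ} (hr : 4 * r ∣ M), r.Coprime q → jacobiHom hr u = 1 := by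
  have hM := Nat.ordProj_mul_ordCompl_eq_self M q
  obtain ⟨a, ha, hqa⟩ := exists_modEq_one_jacobiSym_prime_eq_neg_one hq
    (Nat.coprime_ordCompl hq (NeZero.ne M))
  have haq : a.Coprime q := by
    by_contra hcop
    have hzero : J(q | a) = 0 := jacobiSym.eq_zero_iff.2 ⟨fun ha0 => by simp [ha0] at hqa, by
      rwa [Int.gcd_natCast_natCast, Nat.gcd_comm]⟩
    simp [hzero] at hqa
  have haN : a.Coprime (4 * ordCompl[q] M) := by
    rw [Nat.Coprime, ha.gcd_eq, Nat.gcd_one_left]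
  have haM : a.Coprime M :=
    hM ▸ (haq.pow_right _).mul_right haN.coprime_mul_left_right
  have hu : (ZMod.unitOfCoprime a haM : ZMod M) = a := ZMod.coe_unitOfCoprime a haM
  refine ⟨ZMod.unitOfCoprime a haM, Units.ext ?_, fun {r} hr hrq => Units.ext ?_⟩
  · rw [coe_jacobiHom h hu, hqa, Units.val_neg, Units.val_one]
  · have hrN : r ∣ ordCompl[q] M :=
      (hrq.pow_right _).dvd_of_dvd_mul_left (hM.symm ▸ (Dvd.intro_left 4 rfl).trans hr)
    rw [coe_jacobiHom hr hu, jacobiSym_eq_of_modEq (mul_dvd_mul_left 4 hrN) haN ha,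
      jacobiSym.one_right, Units.val_one]

theorem surjective_pi_jacobiHom {ι : Type*} [Finite ι] {f : ι → ℕ} {M : ℕ} [NeZero M]
    (hprime : ∀ i, (f i).Prime) (hf : f.Injective) (h : ∀ i, 4 * f i ∣ M) :
    Function.Surjective (MonoidHom.pi fun i => jacobiHom (h i)) := by
  classical
  rw [← MonoidHom.range_eq_top, eq_top_iff]
  refine fun x _ => Subgroup.pi_mem_of_mulSingle_mem x fun i => ?_
  obtain hx | hx := Int.units_eq_one_or (x i)
  · rw [hx, Pi.mulSingle_one]
    exact one_mem _
  · obtain ⟨u, hu, hu'⟩ := exists_jacobiHom_eq_neg_one (hprime i) (h i)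
    refine ⟨u, funext fun j => ?_⟩
    obtain rfl | hji := eq_or_ne j i
    · simp [hu, hx]
    · simp [hji, hu' (h j) ((Nat.coprime_primes (hprime j) (hprime i)).2 (hf.ne hji))]

theorem jacobiSym_eq_prod_pow_factorization {z n : ℕ} (hz : z ≠ 0) (hc : n.Coprime z)
    {A : Finset ℕ} (hA : ∀ q, q.Prime → Odd (z.factorization q) → q ∈ A) :
    J(z | n) = ∏ q ∈ A, J(q | n) ^ z.factorization q := by
  have hfac : J(z | n) = z.factorization.prod fun q k => J(q | n) ^ k := by
    rw [Nat.multiplicative_factorization (fun z : ℕ => J(z | n))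
      (fun x y _ => by rw [Nat.cast_mul, jacobiSym.mul_left]) (by simp) hz]
    simp only [Nat.cast_pow, jacobiSym.pow_left]
  calc J(z | n) = ∏ q ∈ z.primeFactors, J(q | n) ^ z.factorization q := hfac
    _ = ∏ q ∈ z.primeFactors ∪ A, J(q | n) ^ z.factorization q :=
        Finset.prod_subset Finset.subset_union_left fun q _ hq => by
          rw [← Nat.support_factorization, Finsupp.notMem_support_iff] at hq
          rw [hq, pow_zero]
    _ = ∏ q ∈ A, J(q | n) ^ z.factorization q :=
        (Finset.prod_subset Finset.subset_union_right fun q hq hqA => by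
          obtain ⟨hprime, hqz, -⟩ :=
            Nat.mem_primeFactors.1 ((Finset.mem_union.1 hq).resolve_right hqA)
          have hqn : (q : ℤ).gcd n = 1 := (hc.coprime_dvd_right hqz).symm
          obtain ⟨k, hk⟩ := even_iff_exists_two_mul.1
            (Nat.not_odd_iff_even.1 (mt (hA q hprime) hqA))
          rw [hk, pow_mul, jacobiSym.sq_one hqn, one_pow]).symm

/-- The vector `v_z` of multiplicities in `z` modulo 2, restricted to the primes in `A`. -/
def parityVector (A : Finset ℕ) (z : ℕ) : A → ZMod 2 :=
  fun q => (z.factorization q : ZMod 2)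

theorem neg_one_uzpow_bijective : Function.Bijective fun x : ZMod 2 => (-1 : ℤˣ) ^ x := by
  decide

theorem uzpow_sum {R ι : Type*} [CommSemiring R] [Module R (Additive ℤˣ)] (e : ℤˣ) (s : Finset ι)
    (f : ι → R) : e ^ (∑ i ∈ s, f i) = ∏ i ∈ s, e ^ f i :=
  Additive.ofMul.injective (by simp [ofMul_prod, Finset.sum_smul])

theorem jacobiHom_eq_neg_one_uzpow {z M : ℕ} [NeZero M] (hz : 4 * z ∣ M) {A : Finset ℕ}
    (hA : ∀ q, q.Prime → Odd (z.factorization q) → q ∈ A) (hAM : ∀ q : A, 4 * (q : ℕ) ∣ M)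
    {u : (ZMod M)ˣ} {w : A → ZMod 2} (hw : ∀ q, jacobiHom (hAM q) u = (-1) ^ w q) :
    jacobiHom hz u = (-1) ^ (parityVector A z ⬝ᵥ w) := by
  have hzM : z ∣ M := (Dvd.intro_left 4 rfl).trans hz
  have hu : (u : ZMod M) = ((u : ZMod M).val : ℕ) := (ZMod.natCast_zmod_val _).symm
  have hprod : jacobiHom hz u = ∏ q : A, jacobiHom (hAM q) u ^ z.factorization q := by
    refine Units.ext ?_
    rw [coe_jacobiHom hz hu, jacobiSym_eq_prod_pow_factorization (ne_zero_of_dvd_ne_zero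
      (NeZero.ne M) hzM) ((ZMod.val_coe_unit_coprime u).coprime_dvd_right hzM) hA,
      ← Finset.prod_coe_sort A]
    simp only [Units.coe_prod, Units.val_pow_eq_pow_val, coe_jacobiHom (hAM _) hu]
  simp only [hprod, dotProduct, uzpow_sum, hw, parityVector, mul_comm _ (w _), uzpow_mul,
    uzpow_natCast]

theorem coe_range_pi_jacobiHom {ι : Type*} {g : ι → ℕ} {M : ℕ} [NeZero M]
    (hg : ∀ i, 4 * g i ∣ M) {A : Finset ℕ} (hprime : ∀ q ∈ A, q.Prime)
    (hAM : ∀ q ∈ A, 4 * q ∣ M) (hA : ∀ i q, q.Prime → Odd ((g i).factorization q) → q ∈ A) :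
    ((MonoidHom.pi fun i => jacobiHom (hg i)).range : Set (ι → ℤˣ)) =
      (fun (y : ι → ZMod 2) i => (-1 : ℤˣ) ^ y i) ''
        (LinearMap.range (Matrix.mulVecLin fun i => parityVector A (g i))) := by
  have hAM' : ∀ q : A, 4 * (q : ℕ) ∣ M := fun q => hAM q q.2
  have hvalue {u : (ZMod M)ˣ} {w : A → ZMod 2} (hw : ∀ q, jacobiHom (hAM' q) u = (-1) ^ w q) :
      MonoidHom.pi (fun i => jacobiHom (hg i)) u = fun i => (-1) ^ (parityVector A (g i) ⬝ᵥ w) :=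
    funext fun i => jacobiHom_eq_neg_one_uzpow (hg i) (hA i) hAM' hw
  refine Set.Subset.antisymm ?_ ?_
  · rintro _ ⟨u, rfl⟩
    choose w hw using fun q : A => neg_one_uzpow_bijective.surjective (jacobiHom (hAM' q) u)
    exact ⟨_, ⟨w, rfl⟩, (hvalue fun q => (hw q).symm).symm⟩
  · rintro _ ⟨_, ⟨w, rfl⟩, rfl⟩
    obtain ⟨u, hu⟩ := surjective_pi_jacobiHom (fun q : A => hprime q q.2)
      Subtype.val_injective hAM' fun q => (-1) ^ w q
    exact ⟨u, hvalue (congrFun hu)⟩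

theorem natCard_range_pi_jacobiHom {ι : Type*} [Finite ι] {g : ι → ℕ} {M : ℕ} [NeZero M]
    (hg : ∀ i, 4 * g i ∣ M) {A : Finset ℕ} (hprime : ∀ q ∈ A, q.Prime)
    (hAM : ∀ q ∈ A, 4 * q ∣ M) (hA : ∀ i q, q.Prime → Odd ((g i).factorization q) → q ∈ A) :
    Nat.card (MonoidHom.pi fun i => jacobiHom (hg i)).range =
      2 ^ Module.finrank (ZMod 2)
        (Submodule.span (ZMod 2) (Set.range fun i => parityVector A (g i))) := by
  have hinj : Function.Injective fun (y : ι → ZMod 2) i => (-1 : ℤˣ) ^ y i :=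
    neg_one_uzpow_bijective.injective.comp_left
  let V : Matrix ι A (ZMod 2) := fun i => parityVector A (g i)
  calc _ = Nat.card (LinearMap.range V.mulVecLin) :=
        (Nat.card_congr (Equiv.setCongr (coe_range_pi_jacobiHom hg hprime hAM hA))).trans
          (Nat.card_image_of_injective hinj _)
    _ = 2 ^ V.rank := by
        rw [Module.natCard_eq_pow_finrank (K := ZMod 2), Nat.card_zmod, Matrix.rank]
    _ = _ := by
        rw [V.rank_eq_finrank_span_row, V.row_def]

end QuadraticSymbols

section CommonQuadraticResidues

theorem four_mul_dvd_four_mul_prod {S : Finset ℕ} (z : S) :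
    4 * (z : ℕ) ∣ 4 * ∏ z ∈ S, z :=
  mul_dvd_mul_left 4 (Finset.dvd_prod_of_mem id z.2)

theorem coprime_four_mul_prod_of_legendreSym_ne_zero {S : Finset ℕ} {p : ℕ} [Fact p.Prime]
    (hp2 : p ≠ 2) (h : ∀ z ∈ S, legendreSym p z ≠ 0) : p.Coprime (4 * ∏ z ∈ S, z) := by
  have hp : p.Prime := Fact.out
  refine Nat.Coprime.mul_right (((Nat.coprime_primes hp Nat.prime_two).2 hp2).pow_right 2)
    (Nat.Coprime.prod_right fun z hz => hp.coprime_iff_not_dvd.2 fun hpz => h z hz ?_)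
  rwa [legendreSym.eq_zero_iff, Int.cast_natCast, ZMod.natCast_eq_zero_iff]

theorem pi_jacobiHom_eq_one_iff {S : Finset ℕ} {M p : ℕ} [NeZero M] [Fact p.Prime]
    (h : ∀ z : S, 4 * (z : ℕ) ∣ M) {u : (ZMod M)ˣ} (hu : (u : ZMod M) = p) :
    MonoidHom.pi (fun z => jacobiHom (h z)) u = 1 ↔ ∀ z ∈ S, legendreSym p z = 1 := by
  simp only [funext_iff, Subtype.forall, MonoidHom.pi_apply, Pi.one_apply, Units.ext_iff,
    coe_jacobiHom _ hu, Units.val_one, jacobiSym.legendreSym.to_jacobiSym]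

theorem setOf_forall_legendreSym_eq_one_eq (S : Finset ℕ) [NeZero (4 * ∏ z ∈ S, z)] :
    {p : ℕ | ∃ hp : Fact p.Prime, p ≠ 2 ∧ ∀ z ∈ S, @legendreSym p hp (z : ℤ) = 1} =
      {p : ℕ | p.Prime ∧ ∃ u : (ZMod (4 * ∏ z ∈ S, z))ˣ, (u : ZMod (4 * ∏ z ∈ S, z)) = p ∧
        MonoidHom.pi (fun z : S => jacobiHom (four_mul_dvd_four_mul_prod z)) u = 1} := by
  ext p
  constructor
  · rintro ⟨hp, hp2, h⟩
    have hcop := coprime_four_mul_prod_of_legendreSym_ne_zero (S := S) hp2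
      fun z hz => by simp [h z hz]
    have hu := ZMod.coe_unitOfCoprime p hcop
    exact ⟨hp.out, _, hu, (pi_jacobiHom_eq_one_iff _ hu).2 h⟩
  · rintro ⟨hp, u, hu, hΨ⟩
    have hcop : p.Coprime (4 * ∏ z ∈ S, z) := (ZMod.isUnit_iff_coprime _ _).1 (hu ▸ u.isUnit)
    have := Fact.mk hp
    refine ⟨this, ?_, (pi_jacobiHom_eq_one_iff _ hu).1 hΨ⟩
    rintro rfl
    have h4 := hcop.coprime_dvd_right (Dvd.intro _ rfl)
    norm_num at h4

end CommonQuadraticResidues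

/-- Theorem 4.9: if `S` is a nonempty finite set of positive integers, `A` the set of primes
dividing some element of `S` with odd multiplicity, and `d` the GF(2)-dimension of the span of
the mod-2 multiplicity vectors of the elements of `S` in `GF(2)^A`, then the set of (odd) primes
`p` for which `S` is a set of quadratic residues has natural density `2 ^ (-d)` in the primes. -/
theorem density_setOf_forall_legendreSym_eq_one (S : Finset ℕ) (hS : S.Nonempty)
    (hpos : ∀ z ∈ S, 0 < z)
    (A : Finset ℕ) (hA : ∀ q : ℕ, q ∈ A ↔ q.Prime ∧ ∃ z ∈ S, Odd (Nat.factorization z q))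
    (d : ℕ)
    (hd : d = Module.finrank (ZMod 2) ↥(Submodule.span (ZMod 2)
      ((fun z : ℕ => fun q : {q : ℕ // q ∈ A} => ((Nat.factorization z q.1 : ℕ) : ZMod 2)) ''
        (S : Set ℕ)))) :
    Filter.Tendsto (fun x : ℕ =>
        (({p : ℕ | (∃ hp : Fact p.Prime, p ≠ 2 ∧ ∀ z ∈ S, @legendreSym p hp (z : ℤ) = 1) ∧
            p ≤ x}.ncard : ℝ)) / ({p : ℕ | p.Prime ∧ p ≤ x}.ncard : ℝ))
      Filter.atTop (nhds ((2 : ℝ) ^ (-(d : ℤ)))) := by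
  have : NeZero (4 * ∏ z ∈ S, z) :=
    ⟨mul_ne_zero four_ne_zero (Finset.prod_ne_zero_iff.2 fun z hz => (hpos z hz).ne')⟩
  have hAM : ∀ q ∈ A, 4 * q ∣ 4 * ∏ z ∈ S, z := fun q hq => by
    obtain ⟨-, z, hz, hodd⟩ := (hA q).1 hq
    exact (mul_dvd_mul_left 4 (Nat.dvd_of_factorization_pos hodd.pos.ne')).trans
      (four_mul_dvd_four_mul_prod ⟨z, hz⟩)
  have hcard := natCard_range_pi_jacobiHom (g := fun z : S => (z : ℕ)) four_mul_dvd_four_mul_prod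
    (fun q hq => ((hA q).1 hq).1) hAM fun z q hq hodd => (hA q).2 ⟨hq, z, z.2, hodd⟩
  have hspan : d = Module.finrank (ZMod 2) (Submodule.span (ZMod 2)
      (Set.range fun z : S => parityVector A z)) := by
    rw [hd, Set.image_eq_range]
    rfl
  have hdensity := hasPrimeDensity_setOf_mem_ker
    (MonoidHom.pi fun z : S => jacobiHom (four_mul_dvd_four_mul_prod z))
  rw [← setOf_forall_legendreSym_eq_one_eq, hcard, ← hspan] at hdensity
  simpa [HasPrimeDensity] using hdensity
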